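/- Conditional IPW identity: under the setup with G + C = 1 a.s., p(X) = E[G|X] with p(X) ≤ 1 − ε a.s., and Y integrable, we have E[Y | G = 1] = E[ (p(X) C / (1 − p(X))) · Y ] / E[ p(X) C / (1 − p(X)) ] whenever E[Y | X, C = 1] = E[Y | X, G = 1] almost surely (conditional mean independence of Y from treatment given X) and P(G=1) > 0. -/

import Mathlib

open MeasureTheory

/-!
Write `p = E[G | m]` and let `w = p / (1 - p)` be the odds of treatment. Since `E[C | m] = 1 - p`,
conditional mean independence says exactly that `E[Y G | m] = w E[Y C | m]`: where `p > 0` this is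
the hypothesis cleared of denominators, and where `p = 0` both sides vanish because `G = 0` almost
everywhere there. As `w` is `m`-measurable, the tower property gives `E[w Y C] = E[Y G]`, and the
case `Y = 1` gives `E[w C] = E[G]`.
-/

section Reweighting

variable {Ω : Type*} {m mΩ : MeasurableSpace Ω} {μ : Measure Ω} {f g w : Ω → ℝ}

lemma setIntegral_mul_eq_of_condExp_eq_mul {s : Set Ω} (hm : m ≤ mΩ) [SigmaFinite (μ.trim hm)]
    (hs : MeasurableSet[m] s) (hw : StronglyMeasurable[m] w) (hf : Integrable f μ)
    (hg : Integrable g μ) (hwg : IntegrableOn (w * g) s μ) (h : μ[f | m] =ᵐ[μ] w * μ[g | m]) :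
    ∫ ω in s, w ω * g ω ∂μ = ∫ ω in s, f ω ∂μ := by
  have indicator_mul (u : Ω → ℝ) : s.indicator w * u = s.indicator (w * u) :=
    funext fun ω => (Set.indicator_mul_left s w u).symm
  have pull_out : μ[s.indicator (w * g) | m] =ᵐ[μ] s.indicator (w * μ[g | m]) := by
    have hwg' := hwg.integrable_indicator (hm s hs)
    rw [← indicator_mul] at hwg' ⊢
    exact (condExp_mul_of_stronglyMeasurable_left (hw.indicator hs) hwg' hg).trans
      (.of_eq (indicator_mul _))
  calc ∫ ω in s, w ω * g ω ∂μ
    _ = ∫ ω, s.indicator (w * g) ω ∂μ := (integral_indicator (hm s hs)).symm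
    _ = ∫ ω, (μ[s.indicator (w * g) | m]) ω ∂μ := (integral_condExp hm).symm
    _ = ∫ ω, s.indicator (w * μ[g | m]) ω ∂μ := integral_congr_ae pull_out
    _ = ∫ ω in s, (w * μ[g | m]) ω ∂μ := integral_indicator (hm s hs)
    _ = ∫ ω in s, (μ[f | m]) ω ∂μ := integral_congr_ae (ae_restrict_of_ae h.symm)
    _ = ∫ ω in s, f ω ∂μ := setIntegral_condExp hm hf hs

lemma integral_mul_eq_of_condExp_eq_mul (hm : m ≤ mΩ) [SigmaFinite (μ.trim hm)]
    (hw : StronglyMeasurable[m] w) (hf : Integrable f μ) (hg : Integrable g μ)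
    (hwg : Integrable (w * g) μ) (h : μ[f | m] =ᵐ[μ] w * μ[g | m]) :
    ∫ ω, w ω * g ω ∂μ = ∫ ω, f ω ∂μ := by
  simpa only [setIntegral_univ] using
    setIntegral_mul_eq_of_condExp_eq_mul hm .univ hw hf hg hwg.integrableOn h

lemma integrable_mul_of_condExp_eq_mul (hm : m ≤ mΩ) [SigmaFinite (μ.trim hm)]
    (hw : StronglyMeasurable[m] w) (hw0 : 0 ≤ᵐ[μ] w) (hf : Integrable f μ) (hf0 : 0 ≤ᵐ[μ] f)
    (hg : Integrable g μ) (hg0 : 0 ≤ᵐ[μ] g) (h : μ[f | m] =ᵐ[μ] w * μ[g | m]) :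
    Integrable (w * g) μ := by
  -- `w` is bounded on each sublevel set `s n`, and `∫ w g = ∫ f ≤ ‖f‖₁` there.
  let s : ℕ → Set Ω := fun n => {ω | w ω ≤ n}
  have hs (n : ℕ) : MeasurableSet[m] (s n) := hw.measurable measurableSet_Iic
  have cover : AECover μ Filter.atTop s :=
    { ae_eventually_mem := ae_of_all μ fun ω => by
        obtain ⟨N, hN⟩ := exists_nat_ge (w ω)
        filter_upwards [Filter.eventually_ge_atTop N] with n hn
        exact hN.trans (Nat.cast_le.mpr hn)
      measurableSet := fun n => hm _ (hs n) }
  have hwg (n : ℕ) : IntegrableOn (w * g) (s n) μ := by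
    refine hg.integrableOn.bdd_mul (c := n) (hw.mono hm).aestronglyMeasurable ?_
    filter_upwards [ae_restrict_of_ae hw0, ae_restrict_mem (hm _ (hs n))] with ω h0 hn
    rwa [Real.norm_of_nonneg h0]
  refine cover.integrable_of_integral_bounded_of_nonneg_ae (∫ ω, f ω ∂μ) hwg ?_
    (.of_forall fun n => ?_)
  · filter_upwards [hw0, hg0] with ω hwω hgω using mul_nonneg hwω hgω
  · exact (setIntegral_mul_eq_of_condExp_eq_mul hm (hs n) hw hf hg (hwg n) h).trans_le
      (setIntegral_le_integral hf hf0)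

lemma ae_eq_zero_restrict_condExp_eq_zero (hm : m ≤ mΩ) [SigmaFinite (μ.trim hm)]
    (hf : Integrable f μ) (hf0 : 0 ≤ᵐ[μ] f) : f =ᵐ[μ.restrict {ω | (μ[f | m]) ω = 0}] 0 := by
  have hs : MeasurableSet[m] {ω | (μ[f | m]) ω = 0} :=
    stronglyMeasurable_condExp.measurable (measurableSet_singleton 0)
  rw [← setIntegral_eq_zero_iff_of_nonneg_ae (ae_restrict_of_ae hf0) hf.integrableOn,
    ← setIntegral_condExp hm hf hs]
  exact setIntegral_eq_zero_of_forall_eq_zero fun _ hω => hω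

lemma condExp_mul_eq_zero_of_condExp_eq_zero (hm : m ≤ mΩ) [SigmaFinite (μ.trim hm)]
    (hf : Integrable f μ) (hf0 : 0 ≤ᵐ[μ] f) (g : Ω → ℝ) :
    ∀ᵐ ω ∂μ, (μ[f | m]) ω = 0 → (μ[fun ω' => g ω' * f ω' | m]) ω = 0 := by
  have hs : MeasurableSet[m] {ω | (μ[f | m]) ω = 0} :=
    stronglyMeasurable_condExp.measurable (measurableSet_singleton 0)
  refine (ae_restrict_iff' (hm _ hs)).mp (condExp_ae_eq_restrict_zero hs ?_)
  filter_upwards [ae_eq_zero_restrict_condExp_eq_zero hm hf hf0] with ω hω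
  simp only [hω, Pi.zero_apply, mul_zero]

end Reweighting

section PropensityOdds

variable {Ω : Type*} {m mΩ : MeasurableSpace Ω} {μ : Measure Ω} {G C Y : Ω → ℝ}

/-- The odds `p / (1 - p)` of treatment for the propensity score `p = E[G | m]`; they reweight the
controls into the treated population. The junk value where `p = 1` is `0`. -/
noncomputable def propensityOdds (μ : Measure Ω) (m : MeasurableSpace Ω) (G : Ω → ℝ) : Ω → ℝ :=
  fun ω => (μ[G | m]) ω / (1 - (μ[G | m]) ω)

lemma propensityOdds_mul (ω : Ω) (c : ℝ) :
    propensityOdds μ m G ω * c = (μ[G | m]) ω * c / (1 - (μ[G | m]) ω) :=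
  div_mul_eq_mul_div _ _ _

lemma stronglyMeasurable_propensityOdds : StronglyMeasurable[m] (propensityOdds μ m G) :=
  have hp : Measurable[m] (μ[G | m]) := stronglyMeasurable_condExp.measurable
  (hp.div (measurable_const.sub hp)).stronglyMeasurable

lemma propensityOdds_nonneg (hG : 0 ≤ᵐ[μ] G) (hp : ∀ᵐ ω ∂μ, (μ[G | m]) ω < 1) :
    0 ≤ᵐ[μ] propensityOdds μ m G := by
  filter_upwards [condExp_nonneg (m := m) hG, hp] with ω h0 h1
  exact div_nonneg h0 (sub_nonneg.mpr h1.le)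

lemma norm_propensityOdds_le {ε : ℝ} (hε : 0 < ε) (hG : 0 ≤ᵐ[μ] G)
    (hp : ∀ᵐ ω ∂μ, (μ[G | m]) ω ≤ 1 - ε) : ∀ᵐ ω ∂μ, ‖propensityOdds μ m G ω‖ ≤ 1 / ε := by
  have hp1 : ∀ᵐ ω ∂μ, (μ[G | m]) ω < 1 := hp.mono fun ω h => by linarith
  filter_upwards [propensityOdds_nonneg hG hp1, hp] with ω h0 h1
  rw [Real.norm_of_nonneg h0]
  exact div_le_div₀ zero_le_one (by linarith) hε (by linarith)

lemma integrable_propensityOdds_mul {ε : ℝ} (hm : m ≤ mΩ) (hε : 0 < ε) (hG : 0 ≤ᵐ[μ] G)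
    (hp : ∀ᵐ ω ∂μ, (μ[G | m]) ω ≤ 1 - ε) {f : Ω → ℝ} (hf : Integrable f μ) :
    Integrable (propensityOdds μ m G * f) μ :=
  hf.bdd_mul (stronglyMeasurable_propensityOdds.mono hm).aestronglyMeasurable
    (norm_propensityOdds_le hε hG hp)

lemma condExp_control [IsFiniteMeasure μ] (hm : m ≤ mΩ) (hG : Integrable G μ)
    (hGC : ∀ᵐ ω ∂μ, G ω = 1 - C ω) : μ[C | m] =ᵐ[μ] fun ω => 1 - (μ[G | m]) ω := by
  have hC : C =ᵐ[μ] (fun _ => 1) - G := hGC.mono fun ω h => by simp [h]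
  have h := (condExp_congr_ae hC).trans (condExp_sub (integrable_const (1 : ℝ)) hG m)
  rwa [condExp_const hm] at h

lemma condExp_eq_propensityOdds_mul [IsFiniteMeasure μ] (hm : m ≤ mΩ) (hG : Integrable G μ)
    (hGC : ∀ᵐ ω ∂μ, G ω = 1 - C ω) (hp : ∀ᵐ ω ∂μ, (μ[G | m]) ω < 1) :
    μ[G | m] =ᵐ[μ] propensityOdds μ m G * μ[C | m] := by
  filter_upwards [condExp_control hm hG hGC, hp] with ω hC h1
  rw [Pi.mul_apply, propensityOdds, hC, div_mul_cancel₀ _ (sub_pos.mpr h1).ne']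

lemma condExp_mul_eq_propensityOdds_mul [IsFiniteMeasure μ] (hm : m ≤ mΩ)
    (hG : Integrable G μ) (hG0 : 0 ≤ᵐ[μ] G) (hGC : ∀ᵐ ω ∂μ, G ω = 1 - C ω)
    (hp : ∀ᵐ ω ∂μ, (μ[G | m]) ω < 1)
    (hcmi : ∀ᵐ ω ∂μ, 0 < (μ[G | m]) ω → 0 < (μ[C | m]) ω →
      (μ[fun ω' => Y ω' * G ω' | m]) ω / (μ[G | m]) ω
        = (μ[fun ω' => Y ω' * C ω' | m]) ω / (μ[C | m]) ω) :
    μ[fun ω => Y ω * G ω | m] =ᵐ[μ] propensityOdds μ m G * μ[fun ω => Y ω * C ω | m] := by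
  filter_upwards [condExp_control hm hG hGC, condExp_nonneg (m := m) hG0, hp, hcmi,
    condExp_mul_eq_zero_of_condExp_eq_zero hm hG hG0 Y] with ω hC h0 h1 hratio hzero
  have hq : 0 < 1 - (μ[G | m]) ω := sub_pos.mpr h1
  rw [hC] at hratio
  rw [Pi.mul_apply, propensityOdds_mul]
  rcases (show 0 ≤ (μ[G | m]) ω from h0).eq_or_lt' with hp0 | hp_pos
  · rw [hzero hp0, hp0, zero_mul, zero_div]
  · rw [eq_div_iff hq.ne', mul_comm ((μ[G | m]) ω)]
    exact (div_eq_div_iff hp_pos.ne' hq.ne').mp (hratio hp_pos hq)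

end PropensityOdds

section Treatment

variable {Ω : Type*} {m mΩ : MeasurableSpace Ω} {μ : Measure Ω} {G C Y : Ω → ℝ}

lemma nonneg_of_zero_or_one (hGv : ∀ᵐ ω ∂μ, G ω = 0 ∨ G ω = 1) : 0 ≤ᵐ[μ] G := by
  filter_upwards [hGv] with ω h
  rcases h with h | h <;> simp [h]

lemma integrable_mul_of_zero_or_one (hY : Integrable Y μ) (hGm : AEMeasurable G μ)
    (hGv : ∀ᵐ ω ∂μ, G ω = 0 ∨ G ω = 1) : Integrable (fun ω => Y ω * G ω) μ := by
  refine hY.mul_bdd (c := 1) hGm.aestronglyMeasurable ?_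
  filter_upwards [hGv] with ω h
  rcases h with h | h <;> simp [h]

lemma integrable_of_zero_or_one [IsFiniteMeasure μ] (hGm : AEMeasurable G μ)
    (hGv : ∀ᵐ ω ∂μ, G ω = 0 ∨ G ω = 1) : Integrable G μ := by
  simpa only [one_mul] using integrable_mul_of_zero_or_one (integrable_const 1) hGm hGv

lemma integral_mul_of_zero_or_one (hGm : AEMeasurable G μ)
    (hGv : ∀ᵐ ω ∂μ, G ω = 0 ∨ G ω = 1) (Y : Ω → ℝ) :
    ∫ ω, Y ω * G ω ∂μ = ∫ ω in {ω | G ω = 1}, Y ω ∂μ := by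
  have hs : NullMeasurableSet {ω | G ω = 1} μ := hGm.nullMeasurable (measurableSet_singleton 1)
  rw [← integral_indicator₀ hs]
  refine integral_congr_ae ?_
  filter_upwards [hGv] with ω h
  rcases h with h | h <;> simp [Set.indicator, h]

lemma control_zero_or_one (hGv : ∀ᵐ ω ∂μ, G ω = 0 ∨ G ω = 1)
    (hGC : ∀ᵐ ω ∂μ, G ω = 1 - C ω) : ∀ᵐ ω ∂μ, C ω = 0 ∨ C ω = 1 := by
  filter_upwards [hGv, hGC] with ω hG hC
  rcases hG with h | h
  · exact .inr (by linarith)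
  · exact .inl (by linarith)

lemma integrable_mul_control (hY : Integrable Y μ) (hGm : AEMeasurable G μ)
    (hGv : ∀ᵐ ω ∂μ, G ω = 0 ∨ G ω = 1) (hGC : ∀ᵐ ω ∂μ, G ω = 1 - C ω) :
    Integrable (fun ω => Y ω * C ω) μ := by
  have hC : (fun ω => 1 - G ω) =ᵐ[μ] C := hGC.mono fun ω h => by simp [h]
  exact integrable_mul_of_zero_or_one hY ((hGm.const_sub 1).congr hC) (control_zero_or_one hGv hGC)

lemma integrable_propensityOdds_mul_mul_control {ε : ℝ} (hm : m ≤ mΩ) (hε : 0 < ε)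
    (hGm : AEMeasurable G μ) (hGv : ∀ᵐ ω ∂μ, G ω = 0 ∨ G ω = 1)
    (hGC : ∀ᵐ ω ∂μ, G ω = 1 - C ω) (hp : ∀ᵐ ω ∂μ, (μ[G | m]) ω ≤ 1 - ε)
    (hY : Integrable Y μ) : Integrable (propensityOdds μ m G * fun ω => Y ω * C ω) μ :=
  integrable_propensityOdds_mul hm hε (nonneg_of_zero_or_one hGv) hp
    (integrable_mul_control hY hGm hGv hGC)

lemma integral_propensityOdds_mul_mul_control [IsFiniteMeasure μ] (hm : m ≤ mΩ)
    (hGm : AEMeasurable G μ) (hGv : ∀ᵐ ω ∂μ, G ω = 0 ∨ G ω = 1)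
    (hGC : ∀ᵐ ω ∂μ, G ω = 1 - C ω) (hp : ∀ᵐ ω ∂μ, (μ[G | m]) ω < 1) (hY : Integrable Y μ)
    (hYw : Integrable (propensityOdds μ m G * fun ω => Y ω * C ω) μ)
    (hcmi : ∀ᵐ ω ∂μ, 0 < (μ[G | m]) ω → 0 < (μ[C | m]) ω →
      (μ[fun ω' => Y ω' * G ω' | m]) ω / (μ[G | m]) ω
        = (μ[fun ω' => Y ω' * C ω' | m]) ω / (μ[C | m]) ω) :
    ∫ ω, propensityOdds μ m G ω * (Y ω * C ω) ∂μ = ∫ ω in {ω | G ω = 1}, Y ω ∂μ := by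
  have hG := integrable_of_zero_or_one hGm hGv
  calc ∫ ω, propensityOdds μ m G ω * (Y ω * C ω) ∂μ
    _ = ∫ ω, Y ω * G ω ∂μ :=
        integral_mul_eq_of_condExp_eq_mul hm stronglyMeasurable_propensityOdds
          (integrable_mul_of_zero_or_one hY hGm hGv) (integrable_mul_control hY hGm hGv hGC) hYw
          (condExp_mul_eq_propensityOdds_mul hm hG (nonneg_of_zero_or_one hGv) hGC hp hcmi)
    _ = ∫ ω in {ω | G ω = 1}, Y ω ∂μ := integral_mul_of_zero_or_one hGm hGv Y

lemma integral_propensityOdds_mul_control [IsFiniteMeasure μ] (hm : m ≤ mΩ)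
    (hGm : AEMeasurable G μ) (hGv : ∀ᵐ ω ∂μ, G ω = 0 ∨ G ω = 1)
    (hGC : ∀ᵐ ω ∂μ, G ω = 1 - C ω) (hp : ∀ᵐ ω ∂μ, (μ[G | m]) ω < 1) :
    ∫ ω, propensityOdds μ m G ω * C ω ∂μ = μ.real {ω | G ω = 1} := by
  have hG := integrable_of_zero_or_one hGm hGv
  have hC : Integrable C μ := by
    simpa only [one_mul] using integrable_mul_control (integrable_const 1) hGm hGv hGC
  have hG0 := nonneg_of_zero_or_one hGv
  have hodds := condExp_eq_propensityOdds_mul hm hG hGC hp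
  have hCw : Integrable (propensityOdds μ m G * C) μ :=
    integrable_mul_of_condExp_eq_mul hm stronglyMeasurable_propensityOdds
      (propensityOdds_nonneg hG0 hp) hG hG0 hC
      (nonneg_of_zero_or_one (control_zero_or_one hGv hGC)) hodds
  calc ∫ ω, propensityOdds μ m G ω * C ω ∂μ
    _ = ∫ ω, G ω ∂μ :=
        integral_mul_eq_of_condExp_eq_mul hm stronglyMeasurable_propensityOdds hG hC hCw hodds
    _ = μ.real {ω | G ω = 1} := by
        simpa using integral_mul_of_zero_or_one hGm hGv fun _ => 1

end Treatment

theorem stmt4_general {Ω : Type*} {m mΩ : MeasurableSpace Ω} (μ : Measure Ω) [IsFiniteMeasure μ]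
    (hm : m ≤ mΩ) (G C Y : Ω → ℝ) (hGm : AEMeasurable G μ) (hY : Integrable Y μ)
    (hGv : ∀ᵐ ω ∂μ, G ω = 0 ∨ G ω = 1) (hGC : ∀ᵐ ω ∂μ, G ω = 1 - C ω)
    (hover : ∀ᵐ ω ∂μ, (μ[G | m]) ω < 1)
    (hYw : Integrable (propensityOdds μ m G * fun ω => Y ω * C ω) μ)
    (hPG : 0 < μ.real {ω | G ω = 1})
    (hcmi : ∀ᵐ ω ∂μ, 0 < (μ[G | m]) ω → 0 < (μ[C | m]) ω →
      (μ[fun ω' => Y ω' * G ω' | m]) ω / (μ[G | m]) ω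
        = (μ[fun ω' => Y ω' * C ω' | m]) ω / (μ[C | m]) ω) :
    0 < ∫ ω, (μ[G | m]) ω * C ω / (1 - (μ[G | m]) ω) ∂μ ∧
      (∫ ω in {ω | G ω = 1}, Y ω ∂μ) / μ.real {ω | G ω = 1}
        = (∫ ω, (μ[G | m]) ω * C ω * Y ω / (1 - (μ[G | m]) ω) ∂μ)
          / (∫ ω, (μ[G | m]) ω * C ω / (1 - (μ[G | m]) ω) ∂μ) := by
  have denominator : ∫ ω, (μ[G | m]) ω * C ω / (1 - (μ[G | m]) ω) ∂μ = μ.real {ω | G ω = 1} := by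
    simpa only [propensityOdds_mul] using integral_propensityOdds_mul_control hm hGm hGv hGC hover
  have numerator : ∫ ω, (μ[G | m]) ω * C ω * Y ω / (1 - (μ[G | m]) ω) ∂μ
      = ∫ ω in {ω | G ω = 1}, Y ω ∂μ := by
    simpa only [propensityOdds_mul, mul_assoc, mul_comm (Y _)] using
      integral_propensityOdds_mul_mul_control hm hGm hGv hGC hover hY hYw hcmi
  rw [denominator, numerator]
  exact ⟨hPG, rfl⟩

/-- Conditional IPW identity: with G + C = 1 a.s., p(X) = E[G|X] ≤ 1 − ε a.s.,
Y bounded, P(G=1) > 0, and conditional mean independence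
E[Y·G|X]/E[G|X] = E[Y·C|X]/E[C|X] a.s. on the set where both denominators are positive,
we have E[Y | G = 1] = E[ p(X)·C·Y/(1−p(X)) ] / E[ p(X)·C/(1−p(X)) ]. -/
theorem stmt4 {Ω : Type*} [MeasurableSpace Ω] (μ : Measure Ω) [IsProbabilityMeasure μ]
    (X G C Y : Ω → ℝ) (hX : Measurable X) (hGm : Measurable G) (hYm : Measurable Y)
    (hGv : ∀ ω, G ω = 0 ∨ G ω = 1) (hGC : ∀ ω, G ω = 1 - C ω)
    (M : ℝ) (hYb : ∀ ω, |Y ω| ≤ M)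
    (ε : ℝ) (hε : 0 < ε)
    (hover : ∀ᵐ ω ∂μ, (μ[G|MeasurableSpace.comap X inferInstance]) ω ≤ 1 - ε)
    (hPG : 0 < (μ {ω | G ω = 1}).toReal)
    (hcmi : ∀ᵐ ω ∂μ,
      0 < (μ[G|MeasurableSpace.comap X inferInstance]) ω →
      0 < (μ[C|MeasurableSpace.comap X inferInstance]) ω →
      (μ[fun ω' => Y ω' * G ω'|MeasurableSpace.comap X inferInstance]) ω
          / (μ[G|MeasurableSpace.comap X inferInstance]) ω
        = (μ[fun ω' => Y ω' * C ω'|MeasurableSpace.comap X inferInstance]) ω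
          / (μ[C|MeasurableSpace.comap X inferInstance]) ω) :
    (∫ ω in {ω | G ω = 1}, Y ω ∂μ) / (μ {ω | G ω = 1}).toReal
      = (∫ ω, (μ[G|MeasurableSpace.comap X inferInstance]) ω * C ω * Y ω
            / (1 - (μ[G|MeasurableSpace.comap X inferInstance]) ω) ∂μ)
        / (∫ ω, (μ[G|MeasurableSpace.comap X inferInstance]) ω * C ω
            / (1 - (μ[G|MeasurableSpace.comap X inferInstance]) ω) ∂μ) := by
  have hY : Integrable Y μ := .of_bound hYm.aestronglyMeasurable M (ae_of_all μ hYb)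
  exact (stmt4_general μ hX.comap_le G C Y hGm.aemeasurable hY (ae_of_all μ hGv) (ae_of_all μ hGC)
    (hover.mono fun ω h => h.trans_lt (sub_lt_self 1 hε))
    (integrable_propensityOdds_mul_mul_control hX.comap_le hε hGm.aemeasurable (ae_of_all μ hGv)
      (ae_of_all μ hGC) hover hY) hPG hcmi).2
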